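/- arXiv:2308.09232 — 3 statements merged into one kernel-verified Lean document; each statement's English description precedes it below -/
import Mathlib

section
/- For every natural number k and every real number λ with λ > k, the function f₊^λ is k times differentiable on all of ℝ and its k-th derivative equals f₊^{λ−k}. -/
/-!
The single-step rule is that `f₊^μ` has derivative `f₊^{μ-1}` everywhere when `μ > 1`
(`hasDerivAt_gelfandShilov`); the only delicate point is the origin, where the one-sided derivatives
are glued. As `λ > k`, the exponents `λ, λ - 1, …, λ - k + 1` all exceed `1`, so the rule can be
iterated `k` times.
-/

/-- The Gelfand–Shilov function `f₊^μ(ς) = ς^μ / Γ(μ+1)` for `ς > 0`, and `0` for `ς ≤ 0`. -/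
noncomputable def gelfandShilov (μ : ℝ) (ς : ℝ) : ℝ :=
  if 0 < ς then ς ^ μ / Real.Gamma (μ + 1) else 0

/-- For `μ > 1` the function `f₊^μ` is differentiable with derivative `f₊^{μ-1}`. Away from `0`
this is the power rule with `Γ(μ+1) = μ Γ(μ)`. At `0` both one-sided derivatives vanish, the right
one because `μ - 1 > 0`. -/
lemma hasDerivAt_gelfandShilov {μ : ℝ} (hμ : 1 < μ) (x : ℝ) :
    HasDerivAt (gelfandShilov μ) (gelfandShilov (μ - 1) x) x := by
  rcases lt_trichotomy x 0 with hx | rfl | hx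
  · have h0 : gelfandShilov (μ - 1) x = 0 := if_neg hx.not_gt
    rw [h0]
    refine (hasDerivAt_const x (0 : ℝ)).congr_of_eventuallyEq ?_
    filter_upwards [Iio_mem_nhds hx] with y hy
    exact if_neg (not_lt.2 (le_of_lt hy))
  · have h0 : gelfandShilov (μ - 1) 0 = 0 := if_neg (lt_irrefl 0)
    have hf0 : gelfandShilov μ 0 = 0 := if_neg (lt_irrefl 0)
    rw [h0, ← hasDerivWithinAt_univ, ← Set.Iic_union_Ici (a := (0 : ℝ))]
    refine HasDerivWithinAt.union ?_ ?_
    · exact (hasDerivWithinAt_const (0 : ℝ) _ (0 : ℝ)).congr (fun y hy => if_neg (not_lt.2 hy)) hf0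
    · have h := ((Real.hasDerivAt_rpow_const (x := 0) (p := μ) (Or.inr hμ.le)).div_const
        (Real.Gamma (μ + 1))).hasDerivWithinAt (s := Set.Ici 0)
      rw [Real.zero_rpow (by linarith), mul_zero, zero_div] at h
      have hr : (0 : ℝ) ^ μ = 0 := Real.zero_rpow (by linarith)
      refine h.congr (fun y hy => ?_) (by rw [hf0, hr, zero_div])
      rcases (Set.mem_Ici.1 hy).eq_or_lt with rfl | hy
      · rw [hf0, hr, zero_div]
      · exact if_pos hy
  · have hd : gelfandShilov (μ - 1) x = μ * x ^ (μ - 1) / Real.Gamma (μ + 1) := by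
      have hG : Real.Gamma μ ≠ 0 := (Real.Gamma_pos_of_pos (by linarith)).ne'
      have hne : μ ≠ 0 := by linarith
      rw [gelfandShilov, if_pos hx, sub_add_cancel, Real.Gamma_add_one hne]
      field_simp
    rw [hd]
    refine ((Real.hasDerivAt_rpow_const (Or.inr hμ.le)).div_const _).congr_of_eventuallyEq ?_
    filter_upwards [Ioi_mem_nhds hx] with y hy
    exact if_pos hy

/-- Formula for the iterated derivatives; each differentiation step starts from an exponent
`lam - j > 1`, so `hasDerivAt_gelfandShilov` applies. -/
lemma iteratedDeriv_gelfandShilov_eq (k : ℕ) (lam : ℝ) (hlam : (k : ℝ) < lam) :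
    iteratedDeriv k (gelfandShilov lam) = gelfandShilov (lam - k) := by
  induction k with
  | zero => simp
  | succ k ih =>
    push_cast at hlam
    rw [iteratedDeriv_succ, ih (by linarith)]
    funext x
    rw [(hasDerivAt_gelfandShilov (by linarith) x).deriv]
    push_cast
    rw [sub_sub]

/-- For every natural number `k` and real `λ > k`, the Gelfand–Shilov function `f₊^λ`
is `k` times differentiable on all of `ℝ` and its `k`-th derivative equals `f₊^{λ−k}`. -/
theorem iteratedDeriv_gelfandShilov (k : ℕ) (lam : ℝ) (hlam : (k : ℝ) < lam) :
    (∀ j < k, Differentiable ℝ (iteratedDeriv j (gelfandShilov lam))) ∧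
      iteratedDeriv k (gelfandShilov lam) = gelfandShilov (lam - k) := by
  refine ⟨fun j hj => ?_, iteratedDeriv_gelfandShilov_eq k lam hlam⟩
  have hjk : (j : ℝ) + 1 ≤ k := by exact_mod_cast hj
  rw [iteratedDeriv_gelfandShilov_eq j lam (by linarith)]
  exact fun x => (hasDerivAt_gelfandShilov (by linarith) x).differentiableAt
end

section
/- Let m be a positive integer, U ⊆ ℝ^m open, let ρ, ν : U → ℝ be smooth and positive, and let τ : U → ℝ be smooth, positive, and satisfy the eikonal equation ν|∇τ|² = ρ on U. Suppose v₀ : U → ℝ is smooth and satisfies the leading-order transport equation 2∇·(ν τ v₀ ∇τ) + 2ν τ ∇τ·∇v₀ − 2mρ v₀ = 0 on U. Then the function u₀ := τ^{−(m−1)/2} v₀ satisfies ∇·(ν u₀² ∇τ) = 0 on U. -/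
/-!
Put `N = ν∇τ`. The Leibniz rule `∇·(f F) = f ∇·F + df(F)` (`sdiv_fun_smul`) and the eikonal
equation, in the form `dτ(N) = ρ`, turn the transport equation into
`τ v₀ ∇·N + 2 τ dv₀(N) = (m - 1) ρ v₀`.
Since `u₀ = τ^a v₀` with `a = -(m - 1)/2`, the same rule gives
`∇·(u₀² N) = τ^(2a) (v₀² ∇·N + 2 v₀ dv₀(N) + 2a v₀² ρ / τ)`,
which is `τ^(2a) v₀ / τ` times the difference of the two sides of the reduced transport equation.
-/

open scoped RealInnerProductSpace

/-- Divergence of a vector field on `ℝ^m`: the trace of its Fréchet derivative. -/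
noncomputable def sdiv {m : ℕ} (F : EuclideanSpace ℝ (Fin m) → EuclideanSpace ℝ (Fin m))
    (x : EuclideanSpace ℝ (Fin m)) : ℝ :=
  ∑ i, fderiv ℝ F x (EuclideanSpace.single i 1) i

theorem sdiv_fun_smul {m : ℕ} {f : EuclideanSpace ℝ (Fin m) → ℝ}
    {F : EuclideanSpace ℝ (Fin m) → EuclideanSpace ℝ (Fin m)}
    {x : EuclideanSpace ℝ (Fin m)} {f' : EuclideanSpace ℝ (Fin m) →L[ℝ] ℝ}
    (hf : HasFDerivAt f f' x) (hF : DifferentiableAt ℝ F x) :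
    sdiv (fun y => f y • F y) x = f x * sdiv F x + f' (F x) := by
  have h := (hf.smul hF.hasFDerivAt).fderiv
  have hsum : f' (F x) = ∑ i, f' (EuclideanSpace.single i 1) * F x i := by
    conv_lhs => rw [← (EuclideanSpace.basisFun (Fin m) ℝ).sum_repr (F x)]
    simp [mul_comm]
  unfold sdiv
  rw [hsum, Finset.mul_sum, ← Finset.sum_add_distrib]
  refine Finset.sum_congr rfl fun i _ => ?_
  change fderiv ℝ (f • F) x _ i = _
  rw [h]
  simp

theorem differentiableAt_gradient {m : ℕ} {f : EuclideanSpace ℝ (Fin m) → ℝ}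
    {x : EuclideanSpace ℝ (Fin m)} (hf : ContDiffAt ℝ (⊤ : ℕ∞) f x) :
    DifferentiableAt ℝ (gradient f) x := by
  have h : DifferentiableAt ℝ (fderiv ℝ f) x :=
    (hf.fderiv_right (m := 1) (by norm_num; exact WithTop.coe_le_coe.2 le_top)).differentiableAt one_ne_zero
  exact ((InnerProductSpace.toDual ℝ (EuclideanSpace ℝ (Fin m))).symm
    |>.toContinuousLinearEquiv.differentiableAt).comp x h

theorem fderiv_apply_eq_inner_gradient {m : ℕ} (f : EuclideanSpace ℝ (Fin m) → ℝ)
    (x v : EuclideanSpace ℝ (Fin m)) : fderiv ℝ f x v = ⟪v, gradient f x⟫ := by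
  rw [real_inner_comm, gradient, InnerProductSpace.toDual_symm_apply]

/-- If `τ` solves the eikonal equation `ν|∇τ|² = ρ` and `v₀` solves the leading-order
transport equation `2∇·(ντ v₀ ∇τ) + 2ντ ∇τ·∇v₀ − 2mρ v₀ = 0` on `U`, then
`u₀ := τ^{−(m−1)/2} v₀` satisfies `∇·(ν u₀² ∇τ) = 0` on `U`. -/
theorem transport_energy_conservation (m : ℕ) (hm : 0 < m)
    (U : Set (EuclideanSpace ℝ (Fin m))) (hU : IsOpen U)
    (ρ ν τ v₀ : EuclideanSpace ℝ (Fin m) → ℝ)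
    (hρ : ContDiffOn ℝ (⊤ : ℕ∞) ρ U) (hν : ContDiffOn ℝ (⊤ : ℕ∞) ν U)
    (hτ : ContDiffOn ℝ (⊤ : ℕ∞) τ U) (hv₀ : ContDiffOn ℝ (⊤ : ℕ∞) v₀ U)
    (hρpos : ∀ x ∈ U, 0 < ρ x) (hνpos : ∀ x ∈ U, 0 < ν x) (hτpos : ∀ x ∈ U, 0 < τ x)
    (heik : ∀ x ∈ U, ν x * ‖gradient τ x‖ ^ 2 = ρ x)
    (htrans : ∀ x ∈ U,
      2 * sdiv (fun y => (ν y * τ y * v₀ y) • gradient τ y) x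
        + 2 * ν x * τ x * ⟪gradient τ x, gradient v₀ x⟫
        - 2 * m * ρ x * v₀ x = 0)
    (u₀ : EuclideanSpace ℝ (Fin m) → ℝ)
    (hu₀ : u₀ = fun x => τ x ^ (-(((m : ℝ) - 1) / 2)) * v₀ x) :
    ∀ x ∈ U, sdiv (fun y => (ν y * (u₀ y) ^ 2) • gradient τ y) x = 0 := by
  intro x hx
  have hUx := hU.mem_nhds hx
  have dν : DifferentiableAt ℝ ν x := (hν.contDiffAt hUx).differentiableAt (by simp)
  have dτ : DifferentiableAt ℝ τ x := (hτ.contDiffAt hUx).differentiableAt (by simp)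
  have dv : DifferentiableAt ℝ v₀ x := (hv₀.contDiffAt hUx).differentiableAt (by simp)
  have hN : DifferentiableAt ℝ (fun y => ν y • gradient τ y) x :=
    dν.smul (differentiableAt_gradient (hτ.contDiffAt hUx))
  have hτx := hτpos x hx
  have ht := htrans x hx
  have e₁ : (fun y => (ν y * τ y * v₀ y) • gradient τ y)
      = fun y => (τ * v₀) y • (ν y • gradient τ y) := by
    funext y; simp only [Pi.mul_apply]; rw [smul_smul]; congr 1; ring
  have e₂ : (fun y => (ν y * (u₀ y) ^ 2) • gradient τ y)
      = fun y => (((fun z => τ z ^ (-(((m : ℝ) - 1) / 2))) * v₀)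
          * ((fun z => τ z ^ (-(((m : ℝ) - 1) / 2))) * v₀)) y • (ν y • gradient τ y) := by
    funext y; rw [hu₀]; simp only [Pi.mul_apply]; rw [smul_smul]; congr 1; ring
  have hu := (dτ.hasFDerivAt.rpow_const (p := -(((m : ℝ) - 1) / 2)) (Or.inl hτx.ne')).mul
    dv.hasFDerivAt
  have heq : fderiv ℝ τ x (ν x • gradient τ x) = ρ x := by
    rw [map_smul, fderiv_apply_eq_inner_gradient, real_inner_self_eq_norm_sq, smul_eq_mul,
      heik x hx]
  have hv : fderiv ℝ v₀ x (ν x • gradient τ x) = ν x * ⟪gradient τ x, gradient v₀ x⟫ := by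
    rw [map_smul, fderiv_apply_eq_inner_gradient, smul_eq_mul]
  rw [e₁, sdiv_fun_smul (dτ.hasFDerivAt.mul dv.hasFDerivAt) hN] at ht
  rw [e₂, sdiv_fun_smul (hu.mul hu) hN]
  simp only [Pi.mul_apply, add_apply, smul_apply, smul_eq_mul,
    heq, hv] at ht ⊢
  -- Only `τ ^ (a - 1) = τ ^ a / τ` is needed, so `τ ^ a` can then be treated as an arbitrary real.
  rw [Real.rpow_sub_one hτx.ne']
  generalize sdiv (fun y => ν y • gradient τ y) x = D at *
  generalize τ x ^ (-(((m : ℝ) - 1) / 2)) = A at *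
  field_simp
  linear_combination (A ^ 2 * v₀ x) * ht
end

section
/- Let m be a positive integer, U ⊆ ℝ^m open, let ρ, ν : U → ℝ be smooth and positive, and let τ : U → ℝ be smooth, positive, and satisfy the eikonal equation ν|∇τ|² = ρ on U. Suppose h₀ : U → ℝ is smooth and satisfies 4ν τ ∇τ·∇h₀ + ∇·(ν ∇τ²) h₀ − 2mρ h₀ = 0 on U, where τ² denotes the pointwise square of τ. Then for every real number s, the function h_s := τ^{−s} h₀ satisfies 4ν τ ∇τ·∇h_s + ∇·(ν ∇τ²) h_s + 2(2s − m) ρ h_s = 0 on U. -/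
/-!
The product and chain rules give `∇(τ^{-s} h₀) = τ^{-s} ∇h₀ - s τ^{-s-1} h₀ ∇τ`. Pairing with
`4ντ∇τ` and using the eikonal equation `ν|∇τ|² = ρ`, the second term contributes
`-4s ρ τ^{-s} h₀`, which the shift of the zeroth-order coefficient from `-2mρ` to `2(2s - m)ρ`
cancels. What remains is `τ^{-s}` times the equation for `h₀`.
-/

open scoped RealInnerProductSpace

/-- Product and chain rules for the gradient of `f^p g`, where `f` is nonzero. -/
theorem hasGradientAt_rpow_mul {E : Type*} [NormedAddCommGroup E] [InnerProductSpace ℝ E]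
    [CompleteSpace E] {f g : E → ℝ} {x : E} (hf : DifferentiableAt ℝ f x)
    (hg : DifferentiableAt ℝ g x) (h0 : f x ≠ 0) (p : ℝ) :
    HasGradientAt (fun y => f y ^ p * g y)
      (f x ^ p • gradient g x + (g x * (p * f x ^ (p - 1))) • gradient f x) x := by
  have h1 := hf.hasGradientAt.hasFDerivAt
  have h2 := hg.hasGradientAt.hasFDerivAt
  have h3 := (h1.rpow_const (p := p) (Or.inl h0)).mul h2
  rw [hasGradientAt_iff_hasFDerivAt]
  refine HasFDerivAt.congr_fderiv h3 ?_
  ext v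
  simp
  ring

/-- If `τ` solves the eikonal equation `ν|∇τ|² = ρ` and `h₀` solves
`4ντ ∇τ·∇h₀ + ∇·(ν∇τ²) h₀ − 2mρ h₀ = 0` on `U`, then for every real `s` the function
`h_s := τ^{−s} h₀` solves `4ντ ∇τ·∇h_s + ∇·(ν∇τ²) h_s + 2(2s−m)ρ h_s = 0` on `U`. -/
theorem homogeneous_transport_solution (m : ℕ) (hm : 0 < m)
    (U : Set (EuclideanSpace ℝ (Fin m))) (hU : IsOpen U)
    (ρ ν τ h₀ : EuclideanSpace ℝ (Fin m) → ℝ)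
    (hρ : ContDiffOn ℝ (⊤ : ℕ∞) ρ U) (hν : ContDiffOn ℝ (⊤ : ℕ∞) ν U)
    (hτ : ContDiffOn ℝ (⊤ : ℕ∞) τ U) (hh₀ : ContDiffOn ℝ (⊤ : ℕ∞) h₀ U)
    (hρpos : ∀ x ∈ U, 0 < ρ x) (hνpos : ∀ x ∈ U, 0 < ν x) (hτpos : ∀ x ∈ U, 0 < τ x)
    (heik : ∀ x ∈ U, ν x * ‖gradient τ x‖ ^ 2 = ρ x)
    (hh₀eq : ∀ x ∈ U,
      4 * ν x * τ x * ⟪gradient τ x, gradient h₀ x⟫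
        + sdiv (fun y => ν y • gradient (fun z => τ z ^ 2) y) x * h₀ x
        - 2 * m * ρ x * h₀ x = 0)
    (s : ℝ) (hs : EuclideanSpace ℝ (Fin m) → ℝ)
    (hhs : hs = fun x => τ x ^ (-s) * h₀ x) :
    ∀ x ∈ U,
      4 * ν x * τ x * ⟪gradient τ x, gradient hs x⟫
        + sdiv (fun y => ν y • gradient (fun z => τ z ^ 2) y) x * hs x
        + 2 * (2 * s - m) * ρ x * hs x = 0 := by
  intro x hx
  have hdτ : DifferentiableAt ℝ τ x :=
    (hτ.contDiffAt (hU.mem_nhds hx)).differentiableAt (by simp)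
  have hdh : DifferentiableAt ℝ h₀ x :=
    (hh₀.contDiffAt (hU.mem_nhds hx)).differentiableAt (by simp)
  have hpos := hτpos x hx
  have hpow : τ x * τ x ^ (-s - 1) = τ x ^ (-s) := by
    rw [Real.rpow_sub_one hpos.ne']
    field_simp
  have he := heik x hx
  have h0 := hh₀eq x hx
  rw [hhs, (hasGradientAt_rpow_mul hdτ hdh hpos.ne' (-s)).gradient, inner_add_right,
    real_inner_smul_right, real_inner_smul_right, real_inner_self_eq_norm_sq]
  linear_combination τ x ^ (-s) * h0 - 4 * s * h₀ x * τ x ^ (-s) * he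
    - 4 * s * ν x * h₀ x * ‖gradient τ x‖ ^ 2 * hpow
end
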